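/- arXiv:0706.3828 — 4 statements merged into one kernel-verified Lean document; each statement's English description precedes it below -/
import Mathlib

section
/- Let 𝔤 be a finite-dimensional semisimple Lie algebra over ℂ and let x ∈ 𝔤 be a regular element, meaning that the dimension of its centralizer is minimal: dim 𝔤_x ≤ dim 𝔤_y for every y ∈ 𝔤. Then the centralizer 𝔤_x is an abelian Lie subalgebra of 𝔤. -/
/-!
Let `Φ` be a nondegenerate invariant bilinear form, such as the Killing form, and let `y` and `z`
centralize `x`. By invariance `Φ u ⁅y, z⁆ = Φ ⁅u, y⁆ z`, and by invariance again `z` is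
`Φ`-orthogonal to the range of `ad x`, so it is enough that `⁅u, y⁆` lies in that range for all `u`.

This is linear algebra. If `A v = 0`, then the range of `B - μ • A` contains
`(B - μ • A) (c - μ • s • v) = B c - μ • (A c + s • B v)` for all `c` and `s`. For generic `μ` the
dimension of the space of these vectors is at least that of `range A + span {B v}`, so if
`B v ∉ range A`, then `B - μ • A` has larger rank than `A`. For `A = ad x` and `B = ad u` this
contradicts the regularity of `x`.
-/

open LinearMap Module

section Pencil

variable {K V W : Type*} [Field K] [AddCommGroup V] [Module K V] [FiniteDimensional K V]
  [AddCommGroup W] [Module K W]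

theorem finite_setOf_not_injective_sub_smul {A : V →ₗ[K] W} (hA : Function.Injective A)
    (B : V →ₗ[K] W) : {μ : K | ¬ Function.Injective (B - μ • A)}.Finite := by
  obtain ⟨G, hG⟩ := A.exists_leftInverse_of_injective (ker_eq_bot.mpr hA)
  refine (End.finite_hasEigenvalue (G ∘ₗ B)).subset fun μ hμ => ?_
  have hker : ker (B - μ • A) ≤ End.eigenspace (G ∘ₗ B) μ := fun v hv => by
    have hBv : B v = μ • A v := sub_eq_zero.mp hv
    have hGA : G (A v) = v := LinearMap.congr_fun hG v
    rw [End.mem_eigenspace_iff, comp_apply, hBv, map_smul, hGA]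
  exact fun hbot => hμ (ker_eq_bot.mp (eq_bot_mono hker hbot))

theorem finite_setOf_finrank_range_sub_smul_lt (A B : V →ₗ[K] W) :
    {μ : K | finrank K (range (B - μ • A)) < finrank K (range A)}.Finite := by
  obtain ⟨C, hC⟩ := (ker A).exists_isCompl
  have hA : Function.Injective (A ∘ₗ C.subtype) :=
    injective_domRestrict_iff.mpr hC.symm.disjoint
  refine (finite_setOf_not_injective_sub_smul hA (B ∘ₗ C.subtype)).subset fun μ hlt hinj => ?_
  have hrank : finrank K (range A) = finrank K C :=
    (A.kerComplementEquivRange hC.symm).finrank_eq.symm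
  have hle : finrank K C ≤ finrank K (range (B - μ • A)) := by
    rw [← finrank_range_of_inj hinj]
    exact Submodule.finrank_mono (range_comp_le_range C.subtype (B - μ • A))
  exact (hrank.trans_le hle).not_gt hlt

theorem finite_setOf_finrank_range_sub_smul_le {A B : V →ₗ[K] W} {v : V} (hv : A v = 0)
    (hBv : B v ∉ range A) :
    {μ : K | finrank K (range (B - μ • A)) ≤ finrank K (range A)}.Finite := by
  let A' : V × K →ₗ[K] W := A.coprod (toSpanSingleton K W (B v))
  let B' : V × K →ₗ[K] W := B ∘ₗ fst K V K
  refine (finite_setOf_finrank_range_sub_smul_lt A' B').subset fun μ hμ => ?_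
  have hA' : finrank K (range A) < finrank K (range A') := by
    rw [range_coprod, range_toSpanSingleton, sup_comm]
    exact Submodule.finrank_lt_finrank_of_lt (Submodule.covBy_span_singleton_sup hBv).lt
  have hfactor : B' - μ • A' = (B - μ • A) ∘ₗ id.coprod (toSpanSingleton K V (-(μ • v))) := by
    ext <;> simp [A', B', hv]
  have hrange : finrank K (range (B' - μ • A')) ≤ finrank K (range (B - μ • A)) := by
    rw [hfactor]
    exact Submodule.finrank_mono (range_comp_le_range _ _)
  exact hrange.trans_lt (hμ.trans_lt hA')

theorem apply_mem_range_of_finrank_ker_le_finrank_ker_sub_smul [Infinite K] {A B : V →ₗ[K] W}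
    (h : ∀ μ : K, finrank K (ker A) ≤ finrank K (ker (B - μ • A))) {v : V} (hv : A v = 0) :
    B v ∈ range A := by
  by_contra hBv
  obtain ⟨μ, hμ⟩ := (finite_setOf_finrank_range_sub_smul_le hv hBv).exists_notMem
  have hlt : finrank K (range A) < finrank K (range (B - μ • A)) := not_le.mp hμ
  have hA := A.finrank_range_add_finrank_ker
  have hBA := (B - μ • A).finrank_range_add_finrank_ker
  have hker := h μ
  omega

end Pencil

theorem lie_mem_range_ad_of_regular {K L : Type*} [Field K] [Infinite K] [LieRing L]
    [LieAlgebra K L] [FiniteDimensional K L] {x y : L}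
    (hreg : ∀ u : L, finrank K (ker (LieAlgebra.ad K L x)) ≤ finrank K (ker (LieAlgebra.ad K L u)))
    (hy : ⁅x, y⁆ = 0) (u : L) : ⁅u, y⁆ ∈ range (LieAlgebra.ad K L x) := by
  refine apply_mem_range_of_finrank_ker_le_finrank_ker_sub_smul (B := LieAlgebra.ad K L u)
    (fun μ => ?_) hy
  rw [← map_smul, ← map_sub]
  exact hreg (u - μ • x)

theorem apply_eq_zero_of_mem_range_ad {R L : Type*} [CommRing R] [LieRing L] [LieAlgebra R L]
    {Φ : LinearMap.BilinForm R L} (hΦ : Φ.lieInvariant L) {x z w : L} (hz : ⁅x, z⁆ = 0)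
    (hw : w ∈ range (LieAlgebra.ad R L x)) : Φ w z = 0 := by
  obtain ⟨u, rfl⟩ := hw
  rw [LieAlgebra.ad_apply, hΦ, hz, map_zero, neg_zero]

theorem centralizer_of_regular_isAbelian_general {K L : Type*} [Field K] [Infinite K] [LieRing L]
    [LieAlgebra K L] [FiniteDimensional K L] {Φ : LinearMap.BilinForm K L} (hΦ : Φ.lieInvariant L)
    (hsep : Φ.SeparatingRight) {x : L}
    (hreg : ∀ u : L, finrank K (ker (LieAlgebra.ad K L x)) ≤ finrank K (ker (LieAlgebra.ad K L u)))
    {y z : L} (hy : ⁅x, y⁆ = 0) (hz : ⁅x, z⁆ = 0) : ⁅y, z⁆ = 0 := by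
  refine hsep _ fun u => ?_
  calc Φ u ⁅y, z⁆ = -Φ ⁅y, u⁆ z := by rw [hΦ, neg_neg]
    _ = Φ ⁅u, y⁆ z := by rw [← lie_skew u y, map_neg, LinearMap.neg_apply]
    _ = 0 := apply_eq_zero_of_mem_range_ad hΦ hz (lie_mem_range_ad_of_regular hreg hy u)

/-- If `x` is a regular element of a finite-dimensional complex semisimple Lie algebra
(i.e. the dimension of its centralizer is minimal), then the centralizer of `x` is abelian. -/
theorem centralizer_of_regular_isAbelian
    (L : Type*) [LieRing L] [LieAlgebra ℂ L] [FiniteDimensional ℂ L]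
    [LieAlgebra.IsSemisimple ℂ L] (x : L)
    (hreg : ∀ y : L,
      Module.finrank ℂ (LinearMap.ker (LieAlgebra.ad ℂ L x)) ≤
        Module.finrank ℂ (LinearMap.ker (LieAlgebra.ad ℂ L y))) :
    ∀ y z : L, ⁅x, y⁆ = 0 → ⁅x, z⁆ = 0 → ⁅y, z⁆ = 0 :=
  fun _ _ => centralizer_of_regular_isAbelian_general (LieModule.traceForm_lieInvariant ℂ L L)
    (LieAlgebra.IsKilling.killingForm_nondegenerate ℂ L).2 hreg
end

section
/- Let E = E_1 ⊕ … ⊕ E_m be a finite-dimensional complex vector space, graded by nonzero subspaces with dim E_i = b_i and b_1 ≥ b_2 ≥ … ≥ b_m ≥ 1. Let x be a nilpotent endomorphism of E such that each E_i is x-invariant and the restriction of x to each E_i is cyclic. Let 𝔥_x = {u ∈ End(E) : u∘x = x∘u} be the centralizer of x in the Lie algebra gl(E). Then the codimension of the derived algebra [𝔥_x, 𝔥_x] in 𝔥_x equals b_1, i.e. dim 𝔥_x − dim [𝔥_x, 𝔥_x] = b_1. -/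
/-- An endomorphism `u` of a finite-dimensional complex vector space `V` is *cyclic* if
there is a vector `e` such that `e, u e, u² e, …, u^(dim V − 1) e` is a basis of `V`. -/
def IsCyclicEnd {V : Type*} [AddCommGroup V] [Module ℂ V] (u : Module.End ℂ V) : Prop :=
  ∃ e : V,
    LinearIndependent ℂ (fun k : Fin (Module.finrank ℂ V) => (u ^ (k : ℕ)) e) ∧
    Submodule.span ℂ (Set.range fun k : Fin (Module.finrank ℂ V) => (u ^ (k : ℕ)) e) = ⊤

/-!
Let `f (i + 1) ∣ f i` with quotients `g i`, and let `R/(f 0) ⊕ … ⊕ R/(f (n - 1))` be the direct sum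
of cyclic modules, with `f n = 1`. For `k > i`, an endomorphism sends the `k`-th generator into
multiples of `g i` in the first `i + 1` summands, so truncating endomorphisms to these summands
modulo `g i` is a ring homomorphism into matrices over `R/(g i)`, and the resulting trace kills
commutators. Conversely, modulo commutators an endomorphism equals its diagonal part, a combination
of the differences `P i - P (i + 1)` of coordinate projections; the traces separate these
differences, and `g i` times the `i`-th one is a commutator. Hence
`End / [End, End] ≃ R/(g 0) ⊕ … ⊕ R/(g (n - 1))`, which for `R = K[X]` has dimension
`∑ deg (g i) = deg (f 0)`. The centralizer of `x` is the endomorphism ring of the `K[X]`-module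
on which `X` acts by `x`, whose cyclic summands are `K[X]/(charpoly)`.
-/

section CommutatorSpan

/-- The derived algebra `[A, A]` of an associative algebra `A` under its commutator bracket,
as a submodule. -/
def commutatorSpan (R A : Type*) [CommRing R] [Ring A] [Algebra R A] : Submodule R A :=
  Submodule.span R {w | ∃ u v : A, w = u * v - v * u}

variable {R A : Type*} [CommRing R] [Ring A] [Algebra R A]

theorem mul_sub_mul_mem_commutatorSpan (u v : A) : u * v - v * u ∈ commutatorSpan R A :=
  Submodule.subset_span ⟨u, v, rfl⟩

theorem sub_sum_mul_mul_mem_commutatorSpan {ι : Type*} [Fintype ι] {e : ι → A}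
    (he : CompleteOrthogonalIdempotents e) (u : A) :
    u - ∑ i, e i * u * e i ∈ commutatorSpan R A := by
  classical
  have hoff {i j : ι} (hij : j ≠ i) : e i * u * e j ∈ commutatorSpan R A := by
    have := mul_sub_mul_mem_commutatorSpan (R := R) (e i) (e i * u * e j)
    rwa [← mul_assoc, ← mul_assoc, (he.idem i).eq, mul_assoc _ (e j), he.ortho hij, mul_zero,
      sub_zero] at this
  have hsum : u = ∑ i, ∑ j, e i * u * e j := by
    simp_rw [← Finset.mul_sum, ← Finset.sum_mul, he.complete, one_mul, mul_one]
  have hdiff : u - ∑ i, e i * u * e i = ∑ i, ∑ j ∈ Finset.univ.erase i, e i * u * e j := by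
    rw [sub_eq_iff_eq_add, ← Finset.sum_add_distrib]
    simpa only [Finset.sum_erase_add _ _ (Finset.mem_univ _)] using hsum
  rw [hdiff]
  exact Submodule.sum_mem _ fun i _ => Submodule.sum_mem _ fun j hj =>
    hoff (Finset.ne_of_mem_erase hj)

theorem restrictScalars_commutatorSpan (K : Type*) [CommRing K] [Algebra K R] [Algebra K A]
    [IsScalarTower K R A] :
    (commutatorSpan R A).restrictScalars K = commutatorSpan K A := by
  refine le_antisymm (fun w hw => ?_) (Submodule.span_le.mpr ?_)
  · refine Submodule.closure_induction (zero_mem _) (fun _ _ _ _ => add_mem) ?_ hw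
    rintro r _ ⟨u, v, rfl⟩
    rw [smul_sub, ← smul_mul_assoc, ← mul_smul_comm]
    exact mul_sub_mul_mem_commutatorSpan _ _
  · rintro _ ⟨u, v, rfl⟩
    exact mul_sub_mul_mem_commutatorSpan u v

theorem map_commutatorSpan {B : Type*} [Ring B] [Algebra R B] (ψ : A →ₐ[R] B) :
    (commutatorSpan R A).map ψ.toLinearMap =
      Submodule.span R {w | ∃ u ∈ LinearMap.range ψ.toLinearMap,
        ∃ v ∈ LinearMap.range ψ.toLinearMap, w = u * v - v * u} := by
  rw [commutatorSpan, Submodule.map_span]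
  congr 1
  ext w
  constructor
  · rintro ⟨_, ⟨u, v, rfl⟩, rfl⟩
    exact ⟨ψ u, ⟨u, rfl⟩, ψ v, ⟨v, rfl⟩, by simp⟩
  · rintro ⟨_, ⟨u, rfl⟩, _, ⟨v, rfl⟩, rfl⟩
    exact ⟨u * v - v * u, ⟨u, v, rfl⟩, by simp⟩

end CommutatorSpan

/-- The direct sum `R/(f 0) ⊕ … ⊕ R/(f (n - 1))` of cyclic modules. The sequence `f` continues past
`n - 1` so that the hypothesis `f n = 1` can close a divisibility chain `f (i + 1) ∣ f i`. -/
abbrev CyclicSum {R : Type*} [CommRing R] (f : ℕ → R) (n : ℕ) : Type _ :=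
  (i : Fin n) → R ⧸ Ideal.span {f i}

namespace CyclicSum

open nonZeroDivisors

variable {R : Type*} [CommRing R] {f g : ℕ → R} {n : ℕ}

/-- The standard generator of the `i`-th summand. -/
def gen (i : Fin n) : CyclicSum f n := Pi.single i 1

theorem gen_apply (i k : Fin n) : (gen i : CyclicSum f n) k = if k = i then 1 else 0 := by
  rcases eq_or_ne k i with rfl | h <;> simp [gen, *]

theorem hom_ext {P : Type*} [AddCommGroup P] [Module R P] {u v : CyclicSum f n →ₗ[R] P}
    (h : ∀ i, u (gen i) = v (gen i)) : u = v :=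
  LinearMap.pi_ext' fun i => Submodule.linearMap_qext _ (LinearMap.ext_ring (h i))

theorem smul_apply_eq_mk_mul {i : Fin n} {v : CyclicSum f n} {a : R}
    (ha : Ideal.Quotient.mk _ a = v i) (r : R) :
    (r • v) i = Ideal.Quotient.mk _ (r * a) := by
  rw [Pi.smul_apply, ← ha, ← smul_eq_mul]
  rfl

theorem smul_gen_eq_zero (i : Fin n) : f i • (gen i : CyclicSum f n) = 0 := by
  ext k
  rcases eq_or_ne k i with rfl | h
  · rw [smul_apply_eq_mk_mul (a := 1) (by simp [gen_apply]), mul_one]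
    exact Ideal.Quotient.eq_zero_iff_mem.mpr (Ideal.mem_span_singleton_self _)
  · simp [gen_apply, h]

/-- The matrix unit sending the `i`-th generator to `a` times the `k`-th one and the other
generators to `0`. -/
def matrixUnit (k i : Fin n) (a : R) (h : f k ∣ a * f i) : Module.End R (CyclicSum f n) :=
  LinearMap.single R _ k ∘ₗ
    Submodule.mapQ _ _ (LinearMap.mulLeft R a)
      ((Ideal.span_singleton_le_iff_mem _).mpr (Ideal.mem_span_singleton.mpr h)) ∘ₗ
    LinearMap.proj i

theorem matrixUnit_gen (k i : Fin n) (a : R) (h : f k ∣ a * f i) (l : Fin n) :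
    matrixUnit k i a h (gen l) = if l = i then a • gen k else 0 := by
  rcases eq_or_ne l i with rfl | hl
  · have : Submodule.mapQ _ _ (LinearMap.mulLeft R a)
        ((Ideal.span_singleton_le_iff_mem _).mpr (Ideal.mem_span_singleton.mpr h))
        (1 : R ⧸ Ideal.span {f l}) = a • (1 : R ⧸ Ideal.span {f k}) := rfl
    simp only [matrixUnit, LinearMap.comp_apply, LinearMap.proj_apply, gen, Pi.single_eq_same,
      this, map_smul, LinearMap.single_apply, if_true]
  · simp [matrixUnit, gen_apply, hl, hl.symm]

/-- The projection onto the `i`-th summand, and `0` if `n ≤ i`. -/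
def diagProj (i : ℕ) : Module.End R (CyclicSum f n) :=
  LinearMap.pi fun k => if (k : ℕ) = i then LinearMap.proj k else 0

theorem diagProj_apply (i : ℕ) (v : CyclicSum f n) (k : Fin n) :
    diagProj i v k = if (k : ℕ) = i then v k else 0 := by
  by_cases h : (k : ℕ) = i <;> simp [diagProj, h]

theorem diagProj_gen (i : ℕ) (k : Fin n) :
    diagProj i (gen k : CyclicSum f n) = if (k : ℕ) = i then gen k else 0 := by
  ext l
  rcases eq_or_ne l k with rfl | h
  · by_cases h : (l : ℕ) = i <;> simp [diagProj_apply, h]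
  · by_cases h' : (k : ℕ) = i <;> simp [diagProj_apply, gen, h, h']

theorem completeOrthogonalIdempotents_diagProj :
    CompleteOrthogonalIdempotents
      fun i : Fin n => (diagProj i : Module.End R (CyclicSum f n)) where
  idem i := hom_ext fun k => by
    by_cases h : k = i <;> simp [diagProj_gen, Fin.val_inj, h]
  ortho i j hij := hom_ext fun k => by
    by_cases h : k = j <;> simp [diagProj_gen, Fin.val_inj, h, hij.symm]
  complete := hom_ext fun k => by
    simp [LinearMap.sum_apply, diagProj_gen, Fin.val_inj]

theorem exists_diagProj_mul_mul_diagProj (u : Module.End R (CyclicSum f n)) (i : Fin n) :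
    ∃ c : R, diagProj i * u * diagProj i = c • (diagProj i : Module.End R (CyclicSum f n)) := by
  obtain ⟨c, hc⟩ := Ideal.Quotient.mk_surjective (u (gen i) i)
  have hgen : diagProj i (u (gen i)) = c • gen i := by
    ext l
    rcases eq_or_ne l i with rfl | hl
    · simp [diagProj_apply, gen_apply, ← hc, Algebra.smul_def]
    · simp [diagProj_apply, gen_apply, hl, Fin.val_inj]
  refine ⟨c, hom_ext fun k => ?_⟩
  rcases eq_or_ne k i with rfl | hk
  · simp [diagProj_gen, hgen]
  · simp [diagProj_gen, Fin.val_inj, hk]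

theorem diagProj_of_le {i : ℕ} (hi : n ≤ i) : (diagProj i : Module.End R (CyclicSum f n)) = 0 :=
  hom_ext fun k => by simp [diagProj_gen, (k.2.trans_le hi).ne]

/-- The difference of two consecutive coordinate projections. These endomorphisms are dual to the
partial traces below. -/
def diagStep (k : ℕ) : Module.End R (CyclicSum f n) :=
  diagProj k - diagProj (k + 1)

theorem exists_sub_sum_smul_diagStep_mem_commutatorSpan (u : Module.End R (CyclicSum f n)) :
    ∃ c : Fin n → R, u - ∑ k : Fin n, c k • diagStep k ∈
      commutatorSpan R (Module.End R (CyclicSum f n)) := by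
  let S := Submodule.span R (Set.range fun k : Fin n =>
    (diagStep k : Module.End R (CyclicSum f n)))
  have hproj {i : ℕ} (hi : i ≤ n) : (diagProj i : Module.End R (CyclicSum f n)) ∈ S := by
    induction hi using Nat.decreasingInduction with
    | self => rw [diagProj_of_le le_rfl]; exact zero_mem _
    | of_succ j hj ih =>
      rw [← sub_add_cancel (diagProj j : Module.End R (CyclicSum f n)) (diagProj (j + 1))]
      exact add_mem (Submodule.subset_span ⟨⟨j, hj⟩, rfl⟩) ih
  have hdiag : ∑ i : Fin n, diagProj i * u * diagProj i ∈ S :=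
    Submodule.sum_mem _ fun i _ => by
      obtain ⟨c, hc⟩ := exists_diagProj_mul_mul_diagProj u i
      rw [hc]
      exact S.smul_mem c (hproj i.2.le)
  obtain ⟨c, hc⟩ := Submodule.mem_span_range_iff_exists_fun R |>.mp hdiag
  exact ⟨c, hc ▸ sub_sum_mul_mul_mem_commutatorSpan completeOrthogonalIdempotents_diagProj u⟩

variable (hfg : ∀ i, f i = g i * f (i + 1))
include hfg

theorem smul_diagStep_mem_commutatorSpan (hn : f n = 1) (i : Fin n) :
    g i • diagStep i ∈ commutatorSpan R (Module.End R (CyclicSum f n)) := by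
  rcases Nat.lt_or_ge (i + 1) n with hi | hi
  · let k : Fin n := ⟨i + 1, hi⟩
    have hdown : f k ∣ 1 * f i := by rw [one_mul, hfg i]; exact dvd_mul_left _ _
    have hup : f i ∣ g i * f k := (hfg i).dvd
    have hcomm : g i • diagStep i =
        matrixUnit i k (g i) hup * matrixUnit k i 1 hdown -
          matrixUnit k i 1 hdown * matrixUnit i k (g i) hup := by
      refine hom_ext fun l => ?_
      have hik : i ≠ k := Fin.ne_of_val_ne (Nat.lt_succ_self _).ne
      have hlk : (l : ℕ) = i + 1 ↔ l = k := (Fin.ext_iff (b := k)).symm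
      rcases eq_or_ne l i with rfl | hli
      · simp [diagStep, diagProj_gen, matrixUnit_gen, hik]
      rcases eq_or_ne l k with rfl | hlk'
      · simp [diagStep, diagProj_gen, matrixUnit_gen, hlk, Fin.val_inj, hli]
      · simp [diagStep, diagProj_gen, matrixUnit_gen, hlk, Fin.val_inj, hli, hlk']
    rw [hcomm]
    exact mul_sub_mul_mem_commutatorSpan _ _
  · have hgf : g i = f i := by rw [hfg i, show (i : ℕ) + 1 = n by omega, hn, mul_one]
    have hzero : g i • (diagProj i : Module.End R (CyclicSum f n)) = 0 := by
      refine hom_ext fun k => ?_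
      rcases eq_or_ne k i with rfl | hk
      · simp [diagProj_gen, hgf, smul_gen_eq_zero]
      · simp [diagProj_gen, Fin.val_inj, hk]
    rw [diagStep, diagProj_of_le hi, sub_zero, hzero]
    exact zero_mem _

theorem eq_prod_Ico_mul {j i : ℕ} (hji : j ≤ i) : f j = (∏ l ∈ Finset.Ico j i, g l) * f i := by
  induction i, hji using Nat.le_induction with
  | base => simp
  | succ i hji ih => rw [ih, Finset.prod_Ico_succ_top hji, mul_assoc, ← hfg]

theorem dvd_of_le {j i : ℕ} (hji : j ≤ i) : g i ∣ f j := by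
  rw [eq_prod_Ico_mul hfg hji, hfg i]
  exact (dvd_mul_right _ _).mul_left _

theorem dvd_of_dvd_mul {j i k : ℕ} (hk : f k ∈ R⁰) (hji : j ≤ i) (hik : i < k) {a : R}
    (h : f j ∣ f k * a) : g i ∣ a := by
  rw [eq_prod_Ico_mul hfg (hji.trans hik.le), mul_comm,
    dvd_cancel_left_mem_nonZeroDivisors hk] at h
  exact (Finset.dvd_prod_of_mem g (Finset.mem_Ico.mpr ⟨hji, hik⟩)).trans h

/-- The first `i + 1` coordinates of a vector, reduced modulo `g i`, which divides `f 0, …, f i`. -/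
def trunc (i : Fin n) : CyclicSum f n →ₗ[R] (Set.Iic i → R ⧸ Ideal.span {g i}) :=
  LinearMap.pi fun j => Submodule.factor
    (Ideal.span_singleton_le_span_singleton.mpr (dvd_of_le hfg j.2)) ∘ₗ LinearMap.proj j.1

/-- The leading `(i + 1) × (i + 1)` block of the matrix of `u`, reduced modulo `g i`. -/
def truncMatrix (i : Fin n) : Module.End R (CyclicSum f n) →ₗ[R]
    Matrix (Set.Iic i) (Set.Iic i) (R ⧸ Ideal.span {g i}) where
  toFun u := Matrix.of fun j k => trunc hfg i (u (gen k)) j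
  map_add' u v := by ext; simp
  map_smul' r u := by ext; simp

theorem truncMatrix_apply (i : Fin n) (u : Module.End R (CyclicSum f n)) (j k : Set.Iic i) :
    truncMatrix hfg i u j k = trunc hfg i (u (gen k)) j := rfl

theorem trunc_gen (i k : Fin n) (j : Set.Iic i) :
    trunc hfg i (gen k) j = if (j : Fin n) = k then 1 else 0 := by
  rcases eq_or_ne (j : Fin n) k with rfl | h
  · simp only [trunc, LinearMap.pi_apply, LinearMap.comp_apply, LinearMap.proj_apply, gen_apply,
      if_true]
    rfl
  · simp [trunc, gen_apply, h]

theorem trunc_apply_gen_of_lt (u : Module.End R (CyclicSum f n)) {i k : Fin n} (hk : f k ∈ R⁰)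
    (hik : i < k) : trunc hfg i (u (gen k)) = 0 := by
  ext j
  obtain ⟨a, ha⟩ := Ideal.Quotient.mk_surjective (u (gen k) j)
  have hkill : f k • u (gen k) = 0 := by rw [← map_smul, smul_gen_eq_zero, map_zero]
  have hdvd : f j ∣ f k * a := by
    rw [← Ideal.mem_span_singleton, ← Ideal.Quotient.eq_zero_iff_mem, ← smul_apply_eq_mk_mul ha,
      hkill, Pi.zero_apply]
  have hga : g i ∣ a := dvd_of_dvd_mul hfg hk j.2 hik hdvd
  have htrunc : trunc hfg i (u (gen k)) j = Ideal.Quotient.mk _ a := by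
    rw [trunc, LinearMap.pi_apply, LinearMap.comp_apply, LinearMap.proj_apply, ← ha]
    rfl
  rw [htrunc, Pi.zero_apply, Ideal.Quotient.eq_zero_iff_mem]
  exact Ideal.mem_span_singleton.mpr hga

theorem truncMatrix_mul (hf : ∀ k, f k ∈ R⁰) (i : Fin n) (u v : Module.End R (CyclicSum f n)) :
    truncMatrix hfg i (u * v) = truncMatrix hfg i u * truncMatrix hfg i v := by
  have htrunc : trunc hfg i ∘ₗ u =
      ((truncMatrix hfg i u).mulVecLin.restrictScalars R) ∘ₗ trunc hfg i := by
    refine hom_ext fun k => funext fun j => ?_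
    have hcomp : (truncMatrix hfg i u).mulVec (trunc hfg i (gen k)) j =
        ∑ l : Set.Iic i, if (l : Fin n) = k then trunc hfg i (u (gen l)) j else 0 := by
      simp only [Matrix.mulVec, dotProduct, trunc_gen, truncMatrix_apply, mul_ite, mul_one,
        mul_zero]
    refine Eq.trans ?_ hcomp.symm
    rcases le_or_gt k i with hk | hk
    · rw [Finset.sum_eq_single ⟨k, hk⟩] <;> simp +contextual [Subtype.ext_iff]
    · rw [Finset.sum_eq_zero fun l _ => if_neg (l.2.trans_lt hk).ne]
      exact congrFun (trunc_apply_gen_of_lt hfg u (hf k) hk) j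
  ext j k
  exact congrFun (LinearMap.congr_fun htrunc (v (gen k))) j

/-- The family of traces modulo `g i` of the leading `(i + 1) × (i + 1)` blocks. It induces the
isomorphism of `End / [End, End]` with `R/(g 0) ⊕ … ⊕ R/(g (n - 1))`. -/
def partialTrace : Module.End R (CyclicSum f n) →ₗ[R] CyclicSum g n :=
  LinearMap.pi fun i =>
    (Matrix.traceLinearMap _ R (R ⧸ Ideal.span {g i})) ∘ₗ truncMatrix hfg i

theorem partialTrace_mul_comm (hf : ∀ k, f k ∈ R⁰) (u v : Module.End R (CyclicSum f n)) :
    partialTrace hfg (u * v) = partialTrace hfg (v * u) := by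
  ext i
  simp only [partialTrace, LinearMap.pi_apply, LinearMap.comp_apply, Matrix.traceLinearMap_apply,
    truncMatrix_mul hfg hf]
  exact Matrix.trace_mul_comm _ _

theorem partialTrace_diagProj (i : ℕ) (k : Fin n) :
    partialTrace hfg (diagProj i) k = if i ≤ k then 1 else 0 := by
  have hdiag (j : Set.Iic k) :
      truncMatrix hfg k (diagProj i) j j = if ((j : Fin n) : ℕ) = i then 1 else 0 := by
    rw [truncMatrix_apply, diagProj_gen]
    split_ifs <;> simp [trunc_gen]
  have hsum : partialTrace hfg (diagProj i) k =
      ∑ j : Set.Iic k, if ((j : Fin n) : ℕ) = i then 1 else 0 :=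
    Finset.sum_congr rfl fun j _ => hdiag j
  rw [hsum]
  split_ifs with hik
  · rw [Finset.sum_eq_single ⟨⟨i, hik.trans_lt k.2⟩, hik⟩] <;>
      simp +contextual [Subtype.ext_iff, Fin.ext_iff]
  · exact Finset.sum_eq_zero fun j _ => if_neg fun h =>
      hik (h.symm.trans_le (Fin.le_def.mp (Set.mem_Iic.mp j.2)))

theorem partialTrace_diagStep (k : Fin n) :
    partialTrace hfg (diagStep k) = gen k := by
  ext i
  simp only [diagStep, map_sub, Pi.sub_apply, partialTrace_diagProj, gen_apply, Fin.ext_iff]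
  rcases lt_trichotomy (i : ℕ) k with h | h | h
  · simp [h.ne, h.not_ge, show ¬ (k : ℕ) + 1 ≤ i by omega]
  · simp [h]
  · simp [h.ne', h.le, Nat.succ_le_of_lt h]

theorem partialTrace_sum_smul_diagStep (c : Fin n → R) (i : Fin n) :
    partialTrace hfg (∑ k : Fin n, c k • diagStep k) i = Ideal.Quotient.mk _ (c i) := by
  simp_rw [map_sum, map_smul, partialTrace_diagStep, Finset.sum_apply, Pi.smul_apply, gen_apply,
    smul_ite, smul_zero, Finset.sum_ite_eq, Finset.mem_univ, if_true, Algebra.smul_def, mul_one]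
  rfl

theorem partialTrace_surjective : Function.Surjective (partialTrace (n := n) hfg) := by
  intro y
  choose c hc using fun i => Ideal.Quotient.mk_surjective (y i)
  exact ⟨_, funext fun i => (partialTrace_sum_smul_diagStep hfg c i).trans (hc i)⟩

theorem ker_partialTrace (hf : ∀ k, f k ∈ R⁰) (hn : f n = 1) :
    LinearMap.ker (partialTrace hfg) = commutatorSpan R (Module.End R (CyclicSum f n)) := by
  have hle : commutatorSpan R (Module.End R (CyclicSum f n)) ≤
      LinearMap.ker (partialTrace hfg) := by
    refine Submodule.span_le.mpr ?_
    rintro _ ⟨u, v, rfl⟩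
    simp [partialTrace_mul_comm hfg hf u v]
  refine le_antisymm (fun u hu => ?_) hle
  obtain ⟨c, hc⟩ := exists_sub_sum_smul_diagStep_mem_commutatorSpan u
  refine (Submodule.sub_mem_iff_left _ (Submodule.sum_mem _ fun k _ => ?_)).mp hc
  have hker := LinearMap.mem_ker.mp (hle hc)
  have hgc : g k ∣ c k := by
    rw [map_sub, LinearMap.mem_ker.mp hu, zero_sub, neg_eq_zero] at hker
    rw [← Ideal.mem_span_singleton, ← Ideal.Quotient.eq_zero_iff_mem,
      ← partialTrace_sum_smul_diagStep hfg, hker, Pi.zero_apply]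
  obtain ⟨d, hd⟩ := hgc
  rw [hd, mul_comm, mul_smul]
  exact Submodule.smul_mem _ d (smul_diagStep_mem_commutatorSpan hfg hn k)

/-- The isomorphism `End / [End, End] ≃ R/(g 0) ⊕ … ⊕ R/(g (n - 1))` given by the partial
traces. -/
noncomputable def quotientCommutatorSpanEquiv (hf : ∀ k, f k ∈ R⁰) (hn : f n = 1) :
    (Module.End R (CyclicSum f n) ⧸ commutatorSpan R (Module.End R (CyclicSum f n))) ≃ₗ[R]
      CyclicSum g n :=
  Submodule.quotEquivOfEq _ _ (ker_partialTrace hfg hf hn).symm ≪≫ₗ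
    (partialTrace hfg).quotKerEquivOfSurjective (partialTrace_surjective hfg)

end CyclicSum

section Centralizer

open Module Polynomial

variable {R V : Type*} [CommRing R] [AddCommGroup V] [Module R V] (x : Module.End R V)

/-- The `R[X]`-linear endomorphisms of `V`, on which `X` acts by `x`, viewed as `R`-linear ones.
They are those commuting with `x`. -/
noncomputable def centralizerHom : Module.End R[X] (AEval' x) →ₐ[R] Module.End R V :=
  AlgHom.ofLinearMap
    { toFun u := (AEval'.of x).symm ∘ₗ u.restrictScalars R ∘ₗ (AEval'.of x)
      map_add' _ _ := rfl
      map_smul' _ _ := rfl }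
    rfl fun _ _ => rfl

theorem centralizerHom_apply (u : Module.End R[X] (AEval' x)) (v : V) :
    centralizerHom x u v = (AEval'.of x).symm (u (AEval'.of x v)) := rfl

theorem centralizerHom_injective : Function.Injective (centralizerHom x) := fun _ _ h =>
  LinearMap.ext fun w => LinearMap.congr_fun h ((AEval'.of x).symm w)

theorem range_centralizerHom :
    LinearMap.range (centralizerHom x).toLinearMap =
      LinearMap.ker (LinearMap.mulLeft R x - LinearMap.mulRight R x) := by
  have hker {w : Module.End R V} :
      w ∈ LinearMap.ker (LinearMap.mulLeft R x - LinearMap.mulRight R x) ↔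
        ∀ v, x (w v) = w (x v) := by
    simp [sub_eq_zero, LinearMap.ext_iff]
  ext w
  rw [hker]
  constructor
  · rintro ⟨u, rfl⟩ v
    rw [AlgHom.toLinearMap_apply, centralizerHom_apply, centralizerHom_apply, ← AEval'.X_smul_of,
      map_smul, AEval'.of_symm_X_smul]
  · intro hw
    exact ⟨LinearMap.ofAEval x (AEval'.of x ∘ₗ w) fun v => by simp [← hw, AEval'.X_smul_of], rfl⟩

/-- The `R[X]`-linear sum map from a family of invariant subspaces, where `X` acts by `x`. -/
noncomputable def aevalSum {ι : Type*} [Fintype ι] [DecidableEq ι] {E : ι → Submodule R V}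
    (hinv : ∀ i, ∀ v ∈ E i, x v ∈ E i) :
    ((i : ι) → AEval' (x.restrict (hinv i))) →ₗ[R[X]] AEval' x :=
  LinearMap.lsum R[X] _ R[X] fun i =>
    LinearMap.ofAEval (x.restrict (hinv i)) (AEval'.of x ∘ₗ (E i).subtype) fun v =>
      (AEval'.X_smul_of x (v : V)).symm

theorem aevalSum_bijective {ι : Type*} [Fintype ι] [DecidableEq ι] {E : ι → Submodule R V}
    (hE : DirectSum.IsInternal E) (hinv : ∀ i, ∀ v ∈ E i, x v ∈ E i) :
    Function.Bijective (aevalSum x hinv) := by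
  let φ : (DirectSum ι fun i => E i) ≃ₗ[R] ((i : ι) → AEval' (x.restrict (hinv i))) :=
    DirectSum.linearEquivFunOnFintype R ι (fun i => E i) ≪≫ₗ
      LinearEquiv.piCongrRight fun i => AEval'.of (x.restrict (hinv i))
  have hφ : (aevalSum x hinv).restrictScalars R ∘ₗ φ.toLinearMap =
      (AEval'.of x).toLinearMap ∘ₗ DirectSum.coeLinearMap E := by
    ext i v
    simp only [aevalSum, LinearMap.lsum_apply, LinearMap.coe_comp, LinearMap.coe_restrictScalars,
      LinearMap.coe_sum, LinearMap.coe_proj, LinearEquiv.coe_coe, Function.comp_apply,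
      LinearEquiv.trans_apply, DirectSum.linearEquivFunOnFintype_lof, Finset.sum_apply,
      Function.eval, LinearEquiv.piCongrRight_apply, DirectSum.coeLinearMap_lof, φ]
    rw [Finset.sum_eq_single i (fun j _ hj => by rw [Pi.single_eq_of_ne hj, map_zero, map_zero])
      (by simp), Pi.single_eq_same]
    rfl
  have hcomp : aevalSum x hinv ∘ φ = AEval'.of x ∘ DirectSum.coeLinearMap E :=
    congrArg DFunLike.coe hφ
  rw [← φ.bijective.of_comp_iff, hcomp]
  exact (AEval'.of x).bijective.comp hE

theorem toSpanSingleton_surjective_of_span_pow_eq_top {e : V}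
    (he : Submodule.span R (Set.range fun k : ℕ => (x ^ k) e) = ⊤) :
    Function.Surjective (LinearMap.toSpanSingleton R[X] (AEval' x) (AEval'.of x e)) := by
  let φ := LinearMap.toSpanSingleton R[X] (AEval' x) (AEval'.of x e)
  have hle : Submodule.span R (Set.range fun k : ℕ => (x ^ k) e) ≤
      (LinearMap.range (φ.restrictScalars R)).comap (AEval'.of x).toLinearMap := by
    refine Submodule.span_le.mpr ?_
    rintro _ ⟨k, rfl⟩
    exact ⟨X ^ k, AEval'.X_pow_smul_of x e k⟩
  intro w
  exact hle (he.ge (Submodule.mem_top (x := (AEval'.of x).symm w)))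

end Centralizer

section Field

open Module Polynomial

variable {K : Type*} [Field K]

namespace CyclicSum

variable {f g : ℕ → K[X]} {n : ℕ}

theorem finrank_eq_sum_natDegree (hf : ∀ i, f i ≠ 0) :
    finrank K (CyclicSum f n) = ∑ i : Fin n, (f i).natDegree := by
  have (i : Fin n) : Module.Finite K (K[X] ⧸ Ideal.span {f i}) :=
    (AdjoinRoot.powerBasis (hf i)).finite
  rw [finrank_pi_fintype]
  exact Finset.sum_congr rfl fun i _ => finrank_quotient_span_eq_natDegree

theorem natDegree_eq_sum_of_eq_mul (hf : ∀ i, f i ≠ 0) (hfg : ∀ i, f i = g i * f (i + 1))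
    (hn : f n = 1) : (f 0).natDegree = ∑ i : Fin n, (g i).natDegree := by
  rw [eq_prod_Ico_mul hfg n.zero_le, hn, mul_one,
    natDegree_prod _ _ fun i _ => left_ne_zero_of_mul (hfg i ▸ hf i), Nat.Ico_zero_eq_range,
    Finset.sum_range]

theorem finrank_quotient_commutatorSpan (hf : ∀ i, f i ≠ 0) (hdvd : ∀ i, f (i + 1) ∣ f i)
    (hn : f n = 1) :
    finrank K
        (Module.End K[X] (CyclicSum f n) ⧸ commutatorSpan K (Module.End K[X] (CyclicSum f n))) =
      (f 0).natDegree := by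
  choose g hg using hdvd
  have hfg (i : ℕ) : f i = g i * f (i + 1) := (hg i).trans (mul_comm _ _)
  have hgi (i : ℕ) : g i ≠ 0 := left_ne_zero_of_mul (hfg i ▸ hf i)
  rw [natDegree_eq_sum_of_eq_mul hf hfg hn, ← finrank_eq_sum_natDegree hgi,
    ← restrictScalars_commutatorSpan (R := K[X]) K]
  exact ((Submodule.Quotient.restrictScalarsEquiv K _) ≪≫ₗ
    (quotientCommutatorSpanEquiv hfg (fun k => mem_nonZeroDivisors_of_ne_zero (hf k))
      hn).restrictScalars K).finrank_eq

end CyclicSum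

theorem finrank_range_sub_finrank_span_commutators {A B : Type*} [Ring A] [Algebra K A] [Ring B]
    [Algebra K B] [FiniteDimensional K A] (ψ : A →ₐ[K] B) (hψ : Function.Injective ψ) :
    finrank K (LinearMap.range ψ.toLinearMap) -
        finrank K (Submodule.span K {w | ∃ u ∈ LinearMap.range ψ.toLinearMap,
          ∃ v ∈ LinearMap.range ψ.toLinearMap, w = u * v - v * u}) =
      finrank K (A ⧸ commutatorSpan K A) := by
  rw [← map_commutatorSpan, LinearMap.finrank_range_of_inj hψ, Submodule.finrank_quotient,
    ← (Submodule.equivMapOfInjective ψ.toLinearMap hψ (commutatorSpan K A)).finrank_eq]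

section Cyclic

variable {W : Type*} [AddCommGroup W] [Module K W] [FiniteDimensional K W] {u : Module.End K W}

theorem nonempty_quotient_charpoly_equiv_aeval
    (hu : ∃ e, Submodule.span K (Set.range fun k : ℕ => (u ^ k) e) = ⊤) :
    Nonempty ((K[X] ⧸ Ideal.span {u.charpoly}) ≃ₗ[K[X]] AEval' u) := by
  obtain ⟨e, he⟩ := hu
  have := u.charpoly_monic.finite_quotient
  have hker : Ideal.span {u.charpoly} ≤
      LinearMap.ker (LinearMap.toSpanSingleton K[X] (AEval' u) (AEval'.of u e)) := by
    rw [Ideal.span_singleton_le_iff_mem, LinearMap.mem_ker, LinearMap.toSpanSingleton_apply,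
      ← AEval.of_aeval_smul, u.aeval_self_charpoly, zero_smul, map_zero]
  let φ := Submodule.liftQ _ _ hker
  have hsurj : Function.Surjective φ := fun w =>
    (toSpanSingleton_surjective_of_span_pow_eq_top u he w).imp' Submodule.Quotient.mk fun _ h => h
  have hdim : finrank K (K[X] ⧸ Ideal.span {u.charpoly}) = finrank K (AEval' u) := by
    rw [finrank_quotient_span_eq_natDegree, u.charpoly_natDegree]
    exact (AEval'.of u).finrank_eq
  have hinj : Function.Injective (φ.restrictScalars K) :=
    (LinearMap.injective_iff_surjective_of_finrank_eq_finrank hdim).mpr hsurj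
  exact ⟨LinearEquiv.ofBijective φ ⟨hinj, hsurj⟩⟩

end Cyclic

theorem finrank_centralizer_sub_finrank_span_commutators {V N : Type*} [AddCommGroup V] [Module K V]
    [FiniteDimensional K V] {x : Module.End K V} [AddCommGroup N] [Module K N] [Module K[X] N]
    [IsScalarTower K K[X] N] (φ : N ≃ₗ[K[X]] AEval' x) :
    finrank K (LinearMap.ker (LinearMap.mulLeft K x - LinearMap.mulRight K x)) -
      finrank K
        (Submodule.span K
          {w : Module.End K V |
            ∃ u ∈ LinearMap.ker (LinearMap.mulLeft K x - LinearMap.mulRight K x),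
            ∃ v ∈ LinearMap.ker (LinearMap.mulLeft K x - LinearMap.mulRight K x),
              w = u * v - v * u}) =
      finrank K (Module.End K[X] N ⧸ commutatorSpan K (Module.End K[X] N)) := by
  let ψ : Module.End K[X] N →ₐ[K] Module.End K V :=
    (centralizerHom x).comp (φ.conjAlgEquiv K).toAlgHom
  have hψ : Function.Injective ψ :=
    (centralizerHom_injective x).comp (φ.conjAlgEquiv K).injective
  have hrange : LinearMap.range ψ.toLinearMap =
      LinearMap.ker (LinearMap.mulLeft K x - LinearMap.mulRight K x) := by
    rw [AlgHom.comp_toLinearMap, LinearMap.range_comp_of_range_eq_top _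
      (LinearMap.range_eq_top.mpr (φ.conjAlgEquiv K).surjective), range_centralizerHom]
  have : FiniteDimensional K (Module.End K[X] N) :=
    Module.Finite.of_injective ψ.toLinearMap hψ
  rw [← hrange, finrank_range_sub_finrank_span_commutators ψ hψ]

theorem charpoly_restrict_eq_X_pow_finrank {V : Type*} [AddCommGroup V] [Module K V]
    [FiniteDimensional K V] {x : Module.End K V} (hx : IsNilpotent x) {p : Submodule K V}
    (hp : ∀ v ∈ p, x v ∈ p) :
    (x.restrict hp).charpoly = X ^ finrank K p := by
  refine IsNilpotent.charpoly_eq_X_pow_finrank ?_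
  obtain ⟨n, hn⟩ := hx
  refine ⟨n, LinearMap.ext fun v => Subtype.ext ?_⟩
  rw [Module.End.pow_restrict, LinearMap.restrict_apply]
  exact LinearMap.congr_fun hn v

theorem codim_derived_centralizer_eq_b1_general {V : Type*} [AddCommGroup V] [Module K V]
    [FiniteDimensional K V] {m : ℕ} (hm : 0 < m) {E : Fin m → Submodule K V}
    (hE : DirectSum.IsInternal E) {x : Module.End K V} (hinv : ∀ i, ∀ v ∈ E i, x v ∈ E i)
    (hcyc : ∀ i, ∃ e : E i,
      Submodule.span K (Set.range fun k : ℕ => (x.restrict (hinv i) ^ k) e) = ⊤)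
    (hdvd : ∀ i j : Fin m, i ≤ j →
      (x.restrict (hinv j)).charpoly ∣ (x.restrict (hinv i)).charpoly) :
    finrank K (LinearMap.ker (LinearMap.mulLeft K x - LinearMap.mulRight K x)) -
      finrank K
        (Submodule.span K
          {w : Module.End K V |
            ∃ u ∈ LinearMap.ker (LinearMap.mulLeft K x - LinearMap.mulRight K x),
            ∃ v ∈ LinearMap.ker (LinearMap.mulLeft K x - LinearMap.mulRight K x),
              w = u * v - v * u}) = finrank K (E ⟨0, hm⟩) := by
  let f (i : ℕ) : K[X] := if h : i < m then (x.restrict (hinv ⟨i, h⟩)).charpoly else 1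
  have hf_apply (i : Fin m) : f i = (x.restrict (hinv i)).charpoly := dif_pos i.2
  have hf_monic (i : ℕ) : (f i).Monic := by
    unfold f
    split_ifs
    exacts [LinearMap.charpoly_monic _, monic_one]
  have hf_dvd (i : ℕ) : f (i + 1) ∣ f i := by
    by_cases hi : i + 1 < m
    · simpa only [f, hi, Nat.lt_of_succ_lt hi, dif_pos] using hdvd _ _ (Nat.le_succ i)
    · simp only [f, hi, dif_neg, not_false_eq_true, one_dvd]
  have hφ (i : Fin m) :
      Nonempty ((K[X] ⧸ Ideal.span {f i}) ≃ₗ[K[X]] AEval' (x.restrict (hinv i))) :=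
    hf_apply i ▸ nonempty_quotient_charpoly_equiv_aeval (hcyc i)
  let φ := LinearEquiv.piCongrRight (fun i => (hφ i).some) ≪≫ₗ
    LinearEquiv.ofBijective (aevalSum x hinv) (aevalSum_bijective x hE hinv)
  rw [finrank_centralizer_sub_finrank_span_commutators φ,
    CyclicSum.finrank_quotient_commutatorSpan (fun i => (hf_monic i).ne_zero) hf_dvd
      (dif_neg (lt_irrefl m)), ← LinearMap.charpoly_natDegree (x.restrict (hinv ⟨0, hm⟩)),
    ← hf_apply]

end Field

theorem IsCyclicEnd.exists_span_range_pow_eq_top {V : Type*} [AddCommGroup V] [Module ℂ V]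
    {u : Module.End ℂ V} (hu : IsCyclicEnd u) :
    ∃ e, Submodule.span ℂ (Set.range fun k : ℕ => (u ^ k) e) = ⊤ := by
  obtain ⟨e, -, he⟩ := hu
  refine ⟨e, eq_top_iff.mpr (he.ge.trans (Submodule.span_mono ?_))⟩
  rintro _ ⟨k, rfl⟩
  exact ⟨k, rfl⟩

/-- Let `E = E₁ ⊕ … ⊕ Eₘ` be a finite-dimensional complex vector space graded by nonzero
subspaces with `dim Eᵢ = bᵢ`, `b₁ ≥ … ≥ bₘ ≥ 1`.  Let `x` be a nilpotent endomorphism of `E`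
stabilizing each `Eᵢ` and restricting to a cyclic endomorphism of each `Eᵢ`, and let
`𝔥ₓ` be the centralizer of `x` in `gl(E)`.  Then the codimension of the derived algebra
`[𝔥ₓ, 𝔥ₓ]` in `𝔥ₓ` is `b₁`. -/
theorem codim_derived_centralizer_eq_b1
    (V : Type*) [AddCommGroup V] [Module ℂ V] [FiniteDimensional ℂ V]
    (m : ℕ) (hm : 0 < m) (E : Fin m → Submodule ℂ V) (hE : DirectSum.IsInternal E)
    (b : Fin m → ℕ) (hb : ∀ i, Module.finrank ℂ (E i) = b i)
    (hmono : ∀ i j : Fin m, i ≤ j → b j ≤ b i) (hpos : ∀ i, 1 ≤ b i)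
    (x : Module.End ℂ V) (hnil : IsNilpotent x)
    (hinv : ∀ i, ∀ v ∈ E i, x v ∈ E i)
    (hcyc : ∀ i, IsCyclicEnd (x.restrict (hinv i))) :
    Module.finrank ℂ
        (LinearMap.ker (LinearMap.mulLeft ℂ x - LinearMap.mulRight ℂ x)) -
      Module.finrank ℂ
        (Submodule.span ℂ
          {w : Module.End ℂ V |
            ∃ u ∈ LinearMap.ker (LinearMap.mulLeft ℂ x - LinearMap.mulRight ℂ x),
            ∃ v ∈ LinearMap.ker (LinearMap.mulLeft ℂ x - LinearMap.mulRight ℂ x),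
              w = u * v - v * u}) = b ⟨0, hm⟩ := by
  have hdvd (i j : Fin m) (hij : i ≤ j) :
      (x.restrict (hinv j)).charpoly ∣ (x.restrict (hinv i)).charpoly := by
    simp_rw [charpoly_restrict_eq_X_pow_finrank hnil, hb]
    exact pow_dvd_pow _ (hmono i j hij)
  rw [← hb]
  exact codim_derived_centralizer_eq_b1_general hm hE hinv
    (fun i => (hcyc i).exists_span_range_pow_eq_top) hdvd
end

section
/- Let E = E_1 ⊕ … ⊕ E_m be a finite-dimensional complex vector space graded by nonzero subspaces, and let x be a nilpotent endomorphism of E such that each E_i is x-invariant and the restriction of x to each E_i is cyclic. Let 𝔥_x = {u ∈ End(E) : u∘x = x∘u} be the centralizer of x in gl(E). Fix indices i ≠ j, and let u ∈ End(E) commute with x, satisfy u(E_i) ⊆ E_j, and vanish on E_k for every k ≠ i. Then u belongs to the derived algebra [𝔥_x, 𝔥_x]. -/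
/-!
Let `p` be the projection onto `E i` along the sum `E'` of the other summands. Both `E i` and `E'`
are `x`-invariant, so `p` lies in the centralizer of `x`. Since `u` vanishes on `E'` and maps
`E i` into `E'`, `u p = u` and `p u = 0`, hence `u = [u, p]` is itself a commutator in the
centralizer.
-/

section Semiring

variable {R V : Type*} [Semiring R] [AddCommMonoid V] [Module R V]

theorem iSup_mem_invtSubmodule {x : Module.End R V} {ι : Sort*} {E : ι → Submodule R V}
    (hE : ∀ k, E k ∈ x.invtSubmodule) : ⨆ k, E k ∈ x.invtSubmodule :=
  iSup_le fun k => (hE k).trans (Submodule.comap_mono (le_iSup E k))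

theorem isCompl_iSup_ne_of_isInternal {ι : Type*} [DecidableEq ι] {E : ι → Submodule R V}
    (hE : DirectSum.IsInternal E) (i : ι) : IsCompl (E i) (⨆ k ≠ i, E k) where
  disjoint := hE.submodule_iSupIndep i
  codisjoint := codisjoint_iff.mpr <|
    (iSup_split_single E i).symm.trans hE.submodule_iSup_eq_top

end Semiring

section Ring

variable {R V : Type*} [Ring R] [AddCommGroup V] [Module R V] {A B : Submodule R V}
  {u x : Module.End R V}

theorem commute_projection_of_mem_invtSubmodule (h : IsCompl A B) (hA : A ∈ x.invtSubmodule)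
    (hB : B ∈ x.invtSubmodule) : Commute (A.projection B h) x := by
  rw [LinearMap.IsIdempotentElem.commute_iff (Submodule.isIdempotentElem_projection h),
    Submodule.range_projection, Submodule.ker_projection]
  exact ⟨hA, hB⟩

theorem mul_projection_sub_projection_mul_eq_self (h : IsCompl A B) (hA : A ≤ B.comap u)
    (hB : B ≤ LinearMap.ker u) : u * A.projection B h - A.projection B h * u = u := by
  have mul_projection : u * A.projection B h = u := by
    apply (LinearMap.IsIdempotentElem.comp_eq_left_iff
      (Submodule.isIdempotentElem_projection h) u).mpr
    rwa [Submodule.ker_projection]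
  have projection_mul : A.projection B h * u = 0 := by
    apply LinearMap.range_le_ker_iff.mp
    rw [Submodule.ker_projection, ← Submodule.map_top, ← h.sup_eq_top,
      Submodule.map_le_iff_le_comap]
    exact sup_le hA (hB.trans (LinearMap.ker_le_comap u))
  rw [mul_projection, projection_mul, sub_zero]

theorem offDiagonal_commutant_mem_derived_general {ι : Type*} [DecidableEq ι]
    {E : ι → Submodule R V} (hE : DirectSum.IsInternal E) (hinv : ∀ k, E k ∈ x.invtSubmodule)
    (hux : Commute x u) {i : ι} (humaps : E i ≤ (⨆ k ≠ i, E k).comap u)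
    (huvanish : ∀ k ≠ i, E k ≤ LinearMap.ker u) :
    ∃ a, Commute x a ∧ ∃ c, Commute x c ∧ u = a * c - c * a := by
  have hcompl := isCompl_iSup_ne_of_isInternal hE i
  have hrest : ⨆ k ≠ i, E k ∈ x.invtSubmodule :=
    iSup_mem_invtSubmodule fun k => iSup_mem_invtSubmodule fun _ => hinv k
  refine ⟨u, hux, (E i).projection _ hcompl, ?_, ?_⟩
  · exact (commute_projection_of_mem_invtSubmodule hcompl (hinv i) hrest).symm
  · exact (mul_projection_sub_projection_mul_eq_self hcompl humaps (iSup₂_le huvanish)).symm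

end Ring

theorem mem_ker_mulLeft_sub_mulRight_iff {R A : Type*} [CommSemiring R]
    [NonUnitalNonAssocRing A] [Module R A] [SMulCommClass R A A] [IsScalarTower R A A] {a b : A} :
    b ∈ LinearMap.ker (LinearMap.mulLeft R a - LinearMap.mulRight R a) ↔ Commute a b := by
  simp only [LinearMap.mem_ker, LinearMap.sub_apply, LinearMap.mulLeft_apply,
    LinearMap.mulRight_apply, sub_eq_zero, Commute, SemiconjBy]

/-- Let `E = E₁ ⊕ … ⊕ Eₘ` be a finite-dimensional complex vector space graded by nonzero
subspaces, and `x` a nilpotent endomorphism stabilizing each `Eᵢ` and cyclic on each `Eᵢ`.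
If `u` commutes with `x`, maps `Eᵢ` into `Eⱼ` (with `i ≠ j`) and vanishes on every `Eₖ`
for `k ≠ i`, then `u` lies in the derived algebra of the centralizer `𝔥ₓ` of `x`. -/
theorem offDiagonal_commutant_mem_derived
    (V : Type*) [AddCommGroup V] [Module ℂ V] [FiniteDimensional ℂ V]
    (m : ℕ) (E : Fin m → Submodule ℂ V) (hE : DirectSum.IsInternal E)
    (hne : ∀ i, E i ≠ ⊥)
    (x : Module.End ℂ V) (hnil : IsNilpotent x)
    (hinv : ∀ i, ∀ v ∈ E i, x v ∈ E i)
    (hcyc : ∀ i, IsCyclicEnd (x.restrict (hinv i)))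
    (i j : Fin m) (hij : i ≠ j)
    (u : Module.End ℂ V) (hux : u * x = x * u)
    (humaps : ∀ v ∈ E i, u v ∈ E j)
    (huvanish : ∀ k : Fin m, k ≠ i → ∀ v ∈ E k, u v = 0) :
    u ∈ Submodule.span ℂ
        {w : Module.End ℂ V |
          ∃ a ∈ LinearMap.ker (LinearMap.mulLeft ℂ x - LinearMap.mulRight ℂ x),
          ∃ c ∈ LinearMap.ker (LinearMap.mulLeft ℂ x - LinearMap.mulRight ℂ x),
            w = a * c - c * a} := by
  obtain ⟨a, ha, c, hc, huac⟩ := offDiagonal_commutant_mem_derived_general hE hinv hux.symm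
    (fun v hv => Submodule.mem_iSup_of_mem j (Submodule.mem_iSup_of_mem hij.symm (humaps v hv)))
    huvanish
  exact Submodule.subset_span ⟨a, mem_ker_mulLeft_sub_mulRight_iff.mpr ha, c,
    mem_ker_mulLeft_sub_mulRight_iff.mpr hc, huac⟩
end

section
/- Let V be a finite-dimensional complex vector space and let x ∈ End(V) admit an invariant-factor decomposition V = V_1 ⊕ … ⊕ V_m with minimal polynomials q_1, …, q_m of degrees b_1 ≥ … ≥ b_m ≥ 1, where q_{j+1} divides q_j. Then for each index i, the dimension of the kernel of q_i(x) equals ∑_{j=1}^{m} min(b_i, b_j). -/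
/-!
An endomorphism `u` of `V` is cyclic exactly when `deg (minpoly u) = dim V`, and cyclicity enters as
this equality. If `minpoly u = f * g`, then `g` divides the minimal polynomial of `u` on the range
of `f(u)`, so that range has dimension at least `deg g`; symmetrically the range of `g(u)`, which
lies in `ker f(u)`, has dimension at least `deg f`. As `deg f + deg g = dim V`, rank-nullity forces
`dim ker f(u) = deg f`. On each summand `V_j` either `q_i` divides `q_j`, so this applies, or `q_j`
divides `q_i` and `q_i(x)` vanishes there; the kernel of `q_i(x)` is the direct sum of its kernels
on the summands.
-/

open Polynomial Module

theorem dvd_of_le_of_forall_succ_dvd {α : Type*} [Monoid α] {m : ℕ} {q : Fin m → α}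
    (h : ∀ (j : ℕ) (hj : j + 1 < m), q ⟨j + 1, hj⟩ ∣ q ⟨j, Nat.lt_of_succ_lt hj⟩)
    {j k : Fin m} (hjk : j ≤ k) : q k ∣ q j := by
  obtain ⟨k, hk⟩ := k
  induction k, (show (j : ℕ) ≤ k from hjk) using Nat.le_induction with
  | base => exact dvd_rfl
  | succ k hle ih => exact (h k hk).trans (ih (Nat.lt_of_succ_lt hk) hle)

theorem coe_aeval_restrict_apply {R M : Type*} [CommSemiring R] [AddCommMonoid M] [Module R M]
    (f : End R M) {N : Submodule R M} (hf : ∀ v ∈ N, f v ∈ N) (p : R[X]) (v : N) :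
    (aeval (f.restrict hf) p v : M) = aeval f p v := by
  induction p using Polynomial.induction_on' with
  | add p q hp hq => simp [hp, hq]
  | monomial n a => simp [aeval_monomial, Module.End.pow_restrict n hf]

section KernelOfDirectSum

variable {ι : Type*} [DecidableEq ι]

theorem range_coeLinearMap_comp_lmap_ker_subtype {R M N : Type*} [Ring R]
    [AddCommGroup M] [Module R M] [AddCommGroup N] [Module R N]
    {E : ι → Submodule R M} (hE : DirectSum.IsInternal E)
    {F : ι → Submodule R N} (hF : iSupIndep F)
    (f : M →ₗ[R] N) (hf : ∀ j, ∀ v ∈ E j, f v ∈ F j) :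
    LinearMap.range (DirectSum.coeLinearMap E ∘ₗ
      DirectSum.lmap fun j => (LinearMap.ker (f.restrict (hf j))).subtype) = LinearMap.ker f := by
  have hcomm : f ∘ₗ DirectSum.coeLinearMap E =
      DirectSum.coeLinearMap F ∘ₗ DirectSum.lmap fun j => f.restrict (hf j) := by
    ext j v
    simp
  have hFker : LinearMap.ker (DirectSum.coeLinearMap F) = ⊥ :=
    LinearMap.ker_eq_bot.2 hF.dfinsupp_lsum_injective
  have hEsurj : LinearMap.range (DirectSum.coeLinearMap E) = ⊤ :=
    LinearMap.range_eq_top.2 hE.surjective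
  calc
    _ = (LinearMap.ker (DirectSum.lmap fun j => f.restrict (hf j))).map
          (DirectSum.coeLinearMap E) := by
      rw [LinearMap.range_comp, DirectSum.range_lmap, DirectSum.ker_lmap]
      simp only [Submodule.range_subtype]
    _ = ((LinearMap.ker f).comap (DirectSum.coeLinearMap E)).map (DirectSum.coeLinearMap E) := by
      rw [← LinearMap.ker_comp, hcomm, LinearMap.ker_comp_of_ker_eq_bot _ hFker]
    _ = LinearMap.ker f := by
      rw [Submodule.map_comap_eq, hEsurj, top_inf_eq]

theorem finrank_ker_eq_sum_finrank_ker_restrict [Fintype ι] {K V W : Type*} [DivisionRing K]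
    [AddCommGroup V] [Module K V] [FiniteDimensional K V] [AddCommGroup W] [Module K W]
    {E : ι → Submodule K V} (hE : DirectSum.IsInternal E)
    {F : ι → Submodule K W} (hF : iSupIndep F)
    (f : V →ₗ[K] W) (hf : ∀ j, ∀ v ∈ E j, f v ∈ F j) :
    finrank K (LinearMap.ker f) = ∑ j, finrank K (LinearMap.ker (f.restrict (hf j))) := by
  have hinj : Function.Injective (DirectSum.coeLinearMap E ∘ₗ
      DirectSum.lmap fun j => (LinearMap.ker (f.restrict (hf j))).subtype) :=
    hE.injective.comp <| (DirectSum.lmap_injective _).2 fun j => Submodule.subtype_injective _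
  rw [← range_coeLinearMap_comp_lmap_ker_subtype hE hF f hf, LinearMap.finrank_range_of_inj hinj,
    finrank_directSum]

end KernelOfDirectSum

section Field

variable {K V : Type*} [Field K] [AddCommGroup V] [Module K V] [FiniteDimensional K V]

theorem finrank_ker_aeval_eq_sum_finrank_ker_aeval_restrict {ι : Type*} [Fintype ι] [DecidableEq ι]
    {E : ι → Submodule K V} (hE : DirectSum.IsInternal E)
    (x : End K V) (hinv : ∀ j, ∀ v ∈ E j, x v ∈ E j) (f : K[X]) :
    finrank K (LinearMap.ker (aeval x f)) =
      ∑ j, finrank K (LinearMap.ker (aeval (x.restrict (hinv j)) f)) := by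
  have hmem : ∀ j, ∀ v ∈ E j, aeval x f v ∈ E j := fun j v hv =>
    coe_aeval_restrict_apply x (hinv j) f ⟨v, hv⟩ ▸ Subtype.prop _
  have hrestrict : ∀ j, (aeval x f).restrict (hmem j) = aeval (x.restrict (hinv j)) f := fun j =>
    LinearMap.ext fun v => Subtype.ext (coe_aeval_restrict_apply x (hinv j) f v).symm
  rw [finrank_ker_eq_sum_finrank_ker_restrict hE hE.submodule_iSupIndep _ hmem]
  exact Finset.sum_congr rfl fun j _ => by rw [hrestrict]

theorem natDegree_minpoly_le_finrank (u : End K V) : (minpoly K u).natDegree ≤ finrank K V :=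
  u.charpoly_natDegree ▸ natDegree_le_of_dvd u.minpoly_dvd_charpoly u.charpoly_monic.ne_zero

theorem natDegree_le_finrank_range_aeval {u : End K V} {f g : K[X]} (h : minpoly K u = f * g) :
    g.natDegree ≤ finrank K (LinearMap.range (aeval u f)) := by
  have hf : f ≠ 0 := left_ne_zero_of_mul (h ▸ minpoly.ne_zero (Algebra.IsIntegral.isIntegral u))
  have hinv : ∀ w ∈ LinearMap.range (aeval u f), u w ∈ LinearMap.range (aeval u f) := by
    rintro _ ⟨v, rfl⟩
    exact ⟨u v, by simpa using congr($((Commute.all f X).map (aeval u)) v)⟩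
  let r := minpoly K (u.restrict hinv)
  have hr : aeval u (f * r) = 0 := by
    rw [mul_comm, map_mul]
    ext v
    simpa [r] using (coe_aeval_restrict_apply u hinv r ⟨aeval u f v, v, rfl⟩).symm
  have hdvd : g ∣ r := (mul_dvd_mul_iff_left hf).1 (h ▸ minpoly.dvd K u hr)
  exact (natDegree_le_of_dvd hdvd (minpoly.ne_zero (Algebra.IsIntegral.isIntegral _))).trans
    (natDegree_minpoly_le_finrank _)

theorem finrank_ker_aeval_of_dvd_minpoly {u : End K V}
    (hu : (minpoly K u).natDegree = finrank K V) {f : K[X]} (hf : f ∣ minpoly K u) :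
    finrank K (LinearMap.ker (aeval u f)) = f.natDegree := by
  obtain ⟨g, hfg⟩ := hf
  have hfg0 : f * g ≠ 0 := hfg ▸ minpoly.ne_zero (Algebra.IsIntegral.isIntegral u)
  have hrange_le : LinearMap.range (aeval u g) ≤ LinearMap.ker (aeval u f) := by
    rw [LinearMap.range_le_ker_iff, ← Module.End.mul_eq_comp, ← map_mul, ← hfg, minpoly.aeval]
  have hlower : f.natDegree ≤ finrank K (LinearMap.ker (aeval u f)) :=
    (natDegree_le_finrank_range_aeval (hfg.trans (mul_comm f g))).trans
      (Submodule.finrank_mono hrange_le)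
  have hrange : g.natDegree ≤ finrank K (LinearMap.range (aeval u f)) :=
    natDegree_le_finrank_range_aeval hfg
  have hrank_nullity := LinearMap.finrank_range_add_finrank_ker (aeval u f)
  rw [hfg, natDegree_mul (left_ne_zero_of_mul hfg0) (right_ne_zero_of_mul hfg0)] at hu
  lia

theorem finrank_ker_aeval_eq_min {u : End K V} (hu : (minpoly K u).natDegree = finrank K V)
    {f : K[X]} (hf0 : f ≠ 0) (hf : f ∣ minpoly K u ∨ minpoly K u ∣ f) :
    finrank K (LinearMap.ker (aeval u f)) = min f.natDegree (finrank K V) := by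
  rcases hf with hf | hf
  · have hle := natDegree_le_of_dvd hf (minpoly.ne_zero (Algebra.IsIntegral.isIntegral u))
    rw [finrank_ker_aeval_of_dvd_minpoly hu hf, min_eq_left (hu ▸ hle)]
  · have hle := natDegree_le_of_dvd hf hf0
    rw [minpoly.dvd_iff.1 hf, LinearMap.ker_zero, finrank_top, min_eq_right (hu ▸ hle)]

theorem finrank_ker_aeval_invariant_factor_general {ι : Type*} [Fintype ι] [DecidableEq ι]
    {x : End K V} {E : ι → Submodule K V} (hE : DirectSum.IsInternal E)
    (hinv : ∀ j, ∀ v ∈ E j, x v ∈ E j)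
    {q : ι → K[X]} (hq : ∀ j, q j = minpoly K (x.restrict (hinv j)))
    (hdeg : ∀ j, (q j).natDegree = finrank K (E j))
    (hchain : ∀ i j, q i ∣ q j ∨ q j ∣ q i) (i : ι) :
    finrank K (LinearMap.ker (aeval x (q i))) =
      ∑ j, min (finrank K (E i)) (finrank K (E j)) := by
  have hqi : q i ≠ 0 := hq i ▸ minpoly.ne_zero (Algebra.IsIntegral.isIntegral _)
  rw [finrank_ker_aeval_eq_sum_finrank_ker_aeval_restrict hE x hinv, ← hdeg i]
  exact Finset.sum_congr rfl fun j _ =>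
    finrank_ker_aeval_eq_min (hq j ▸ hdeg j) hqi (hq j ▸ hchain i j)

end Field

/-- Let `x ∈ End(V)` admit an invariant-factor decomposition `V = V₁ ⊕ … ⊕ Vₘ` with
minimal polynomials `q₁, …, qₘ` of degrees `b₁ ≥ … ≥ bₘ ≥ 1`, where `qⱼ₊₁ ∣ qⱼ`.
Then for each `i`, `dim ker qᵢ(x) = ∑ⱼ min(bᵢ, bⱼ)`. -/
theorem finrank_ker_aeval_invariant_factor
    (V : Type*) [AddCommGroup V] [Module ℂ V] [FiniteDimensional ℂ V]
    (x : Module.End ℂ V)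
    (m : ℕ) (E : Fin m → Submodule ℂ V) (hE : DirectSum.IsInternal E)
    (hne : ∀ j, E j ≠ ⊥)
    (hinv : ∀ j, ∀ v ∈ E j, x v ∈ E j)
    (hcyc : ∀ j, IsCyclicEnd (x.restrict (hinv j)))
    (q : Fin m → Polynomial ℂ) (hq : ∀ j, q j = minpoly ℂ (x.restrict (hinv j)))
    (b : Fin m → ℕ) (hbE : ∀ j, Module.finrank ℂ (E j) = b j)
    (hdeg : ∀ j, (q j).natDegree = b j)
    (hmono : ∀ j k : Fin m, j ≤ k → b k ≤ b j) (hpos : ∀ j, 1 ≤ b j)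
    (hdvd : ∀ (j : ℕ) (h : j + 1 < m), q ⟨j + 1, h⟩ ∣ q ⟨j, Nat.lt_of_succ_lt h⟩) :
    ∀ i : Fin m,
      Module.finrank ℂ (LinearMap.ker (Polynomial.aeval x (q i))) =
        ∑ j : Fin m, min (b i) (b j) := by
  have hchain (i j : Fin m) : q i ∣ q j ∨ q j ∣ q i :=
    (le_total j i).imp (dvd_of_le_of_forall_succ_dvd hdvd) (dvd_of_le_of_forall_succ_dvd hdvd)
  simpa only [hbE] using finrank_ker_aeval_invariant_factor_general hE hinv hq
    (fun j => (hdeg j).trans (hbE j).symm) hchain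
end
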